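/- Let the weighted digraph be weakly connected, let every edge weight be nonzero, and suppose every vertex has out-degree at least 1. Then the all-ones vector lies in the column space of A (there exists x ∈ ℝ^m with A.mulVec x = 1ₙ), and the null space of A*W is strictly contained in the null space of Le: there exists x ∈ ℝ^m with Le.mulVec x = 0 but (A*W).mulVec x ≠ 0 (while every x with (A*W).mulVec x = 0 also satisfies Le.mulVec x = 0). -/

import Mathlib

open Matrix

/-- For a weakly connected weighted digraph with nonzero edge weights
in which every vertex has out-degree at least 1, the all-ones vector lies in the range
of `A`, and the null space of `A * W` is strictly contained in that of `Le`. -/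
theorem nullspace_AW_ssubset_nullspace_Le_of_all_outdeg_pos
    (n m : ℕ) (hn : 2 ≤ n) (hm : 1 ≤ m)
    (tail head : Fin m → Fin n) (hth : ∀ e, tail e ≠ head e)
    (w : Fin m → ℝ) (hw : ∀ e, w e ≠ 0)
    (E : Matrix (Fin n) (Fin m) ℝ)
    (hE : ∀ v e, E v e = if v = tail e then 1 else if v = head e then -1 else 0)
    (A : Matrix (Fin n) (Fin m) ℝ)
    (hA : ∀ v e, A v e = if v = tail e then 1 else 0)
    (W : Matrix (Fin m) (Fin m) ℝ) (hW : W = Matrix.diagonal w)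
    (Le : Matrix (Fin m) (Fin m) ℝ) (hLe : Le = Eᵀ * A * W)
    (hconn : ∀ u v : Fin n,
      Relation.ReflTransGen
        (fun a b => (∃ e, tail e = a ∧ head e = b) ∨ (∃ e, tail e = b ∧ head e = a)) u v)
    (hout : ∀ v : Fin n, ∃ e, tail e = v) :
    (∃ x : Fin m → ℝ, A.mulVec x = fun _ => 1) ∧
    (∀ x : Fin m → ℝ, (A * W).mulVec x = 0 → Le.mulVec x = 0) ∧
    (∃ x : Fin m → ℝ, Le.mulVec x = 0 ∧ (A * W).mulVec x ≠ 0) := by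
  have h1 : ∃ x : Fin m → ℝ, A.mulVec x = fun _ => 1 := by
    choose f hf using hout
    refine ⟨fun e => if e = f (tail e) then 1 else 0, ?_⟩
    funext v
    simp only [Matrix.mulVec, dotProduct, hA]
    rw [Finset.sum_eq_single (f v)]
    · simp [hf]
    · intro e _ he
      by_cases h : v = tail e
      · subst h
        simp [he]
      · simp [h]
    · simp
  refine ⟨h1, ?_, ?_⟩
  · intro x hx
    rw [hLe, Matrix.mul_assoc, ← Matrix.mulVec_mulVec, hx, Matrix.mulVec_zero]
  · obtain ⟨x, hx⟩ := h1
    have h2 : (A * W).mulVec (fun e => (w e)⁻¹ * x e) = fun _ => 1 := by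
      rw [← Matrix.mulVec_mulVec, ← hx]
      congr 1
      funext e
      rw [hW, Matrix.mulVec_diagonal, mul_inv_cancel_left₀ (hw e)]
    refine ⟨fun e => (w e)⁻¹ * x e, ?_, ?_⟩
    · rw [hLe, Matrix.mul_assoc, ← Matrix.mulVec_mulVec, h2]
      funext e
      simp only [Matrix.mulVec, dotProduct, Matrix.transpose_apply, hE, mul_one, Pi.zero_apply]
      have h3 : ∀ v, (if v = tail e then (1:ℝ) else if v = head e then -1 else 0)
          = (if v = tail e then 1 else 0) - (if v = head e then 1 else 0) := by
        intro v
        by_cases h : v = tail e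
        · subst h
          simp [hth e]
        · by_cases h' : v = head e <;> simp [h, h', (hth e).symm]
      simp only [h3, Finset.sum_sub_distrib]
      simp
    · rw [h2]
      intro h
      have := congrFun h ⟨0, by omega⟩
      simp at this
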